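/- For any doubly-regular tournament DR_n of order n (so n ≡ 3 mod 4), the number of 8-cycles satisfies c_8(DR_n) = (n+1)·n·(n−1)·(n−3)²·(n−7)·(n²−7n+1)/2048. -/

import Mathlib

/-- A tournament on the vertex type `V`. -/
structure Tournament (V : Type*) where
  r : V → V → Prop
  dec : DecidableRel r
  irrefl : ∀ i, ¬ r i i
  total : ∀ i j, i ≠ j → (r i j ↔ ¬ r j i)

attribute [instance] Tournament.dec

/-- A doubly-regular tournament of order `4t+3`: every pair of distinct vertices
jointly dominates exactly `t` vertices. -/
def Tournament.IsDoublyRegular {V : Type*} (T : Tournament V) (t : ℕ) : Prop :=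
  ∀ i j : V, i ≠ j → Nat.card {k : V // T.r i k ∧ T.r j k} = t

/-- The number of directed `m`-cycles of the relation `r`: each `m`-cycle corresponds
to exactly `m` injective cyclic sequences (one for each rotation). -/
noncomputable def numCycles {V : Type*} (r : V → V → Prop) (m : ℕ) : ℕ :=
  Nat.card {γ : ZMod m → V // Function.Injective γ ∧ ∀ k, r (γ k) (γ (k + 1))} / m

/-!
Label the entries of an eight-cycle of `T` alternately: the even entries `x, y, z, w` are four
distinct vertices, and the odd entries are midpoints of paths of length two along the sides of the
closed walk `x, y, z, w`. Since `T` has no cycles of length two, midpoints of adjacent sides are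
automatically distinct, so for two opposite sides the number of admissible pairs of midpoints is
`P * P' - M`, where `P` and `P'` count the paths along each side and `M` counts the common
midpoints; the number of cyclic sequences is the sum of `(P * P' - M) * (Q * Q' - N)`.

Double regularity makes `P` and `Q` explicit functions of the tournament on `{x, y, z, w}`. Summed
over the six cyclic orders of a quadruple, `P * P' * Q * Q'` involves only stars and four-cycles,
which have the same number in every doubly-regular tournament. The terms `M * Q * Q'` are counted
around the common midpoint, whose in-set and out-set both induce regular tournaments, and `M * N`
around the two common midpoints.
-/

open Finset

section DistinctSums

variable {V R : Type*}

/-- The sum of `f` over the six cyclic orders of four elements, each read off from `x`. -/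
def cyclicOrderSum [Add R] (f : V → V → V → V → R) (x y z w : V) : R :=
  f x y z w + f x y w z + f x z y w + f x z w y + f x w y z + f x w z y

/-- The sum of `f` over the four choices of a distinguished element, listed first. -/
def vertexSum [Add R] (f : V → V → V → V → R) (x y z w : V) : R :=
  f x y z w + f y x z w + f z x y w + f w x y z

/-- The weight of the star with centre `x` and leaves `y`, `z`, `w`. -/
def starWeight [Mul R] (u : V → V → R) (x y z w : V) : R := u x y * u x z * u x w

/-- The weight of the four-cycle `x, y, z, w`. -/
def cycleWeight [Mul R] (u : V → V → R) (x y z w : V) : R := u x y * u y z * u z w * u w x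

variable [Fintype V] [DecidableEq V]

/-- The sum of `f` over ordered quadruples of distinct elements. -/
def distinctSum [Semiring R] (f : V → V → V → V → R) : R :=
  ∑ x, ∑ y, ∑ z, ∑ w, if [x, y, z, w].Nodup then f x y z w else 0

section Semiring

variable [Semiring R]

lemma distinctSum_congr {f g : V → V → V → V → R}
    (h : ∀ x y z w, [x, y, z, w].Nodup → f x y z w = g x y z w) :
    distinctSum f = distinctSum g :=
  sum_congr rfl fun x _ => sum_congr rfl fun y _ => sum_congr rfl fun z _ =>
    sum_congr rfl fun w _ => by split_ifs with hd; exacts [h x y z w hd, rfl]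

lemma distinctSum_eq_sum {f : V → V → V → V → R}
    (hf : ∀ x y z w, ¬ [x, y, z, w].Nodup → f x y z w = 0) :
    distinctSum f = ∑ x, ∑ y, ∑ z, ∑ w, f x y z w :=
  sum_congr rfl fun x _ => sum_congr rfl fun y _ => sum_congr rfl fun z _ =>
    sum_congr rfl fun w _ => by split_ifs with hd; exacts [rfl, (hf x y z w hd).symm]

lemma distinctSum_add (f g : V → V → V → V → R) :
    distinctSum (fun x y z w => f x y z w + g x y z w) = distinctSum f + distinctSum g := by
  simp only [distinctSum, ite_add_zero, sum_add_distrib]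

lemma distinctSum_const_mul (c : R) (f : V → V → V → V → R) :
    distinctSum (fun x y z w => c * f x y z w) = c * distinctSum f := by
  simp only [distinctSum, mul_sum, mul_ite, mul_zero]

lemma distinctSum_swap₁₂ (f : V → V → V → V → R) :
    distinctSum (fun x y z w => f y x z w) = distinctSum f := by
  unfold distinctSum
  rw [sum_comm]
  exact sum_congr rfl fun x _ => sum_congr rfl fun y _ => sum_congr rfl fun z _ =>
    sum_congr rfl fun w _ => if_congr (List.Perm.swap ..).nodup_iff rfl rfl

lemma distinctSum_swap₂₃ (f : V → V → V → V → R) :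
    distinctSum (fun x y z w => f x z y w) = distinctSum f := by
  refine sum_congr rfl fun x _ => ?_
  rw [sum_comm]
  exact sum_congr rfl fun y _ => sum_congr rfl fun z _ => sum_congr rfl fun w _ =>
    if_congr ((List.Perm.swap ..).cons x).nodup_iff rfl rfl

lemma distinctSum_swap₃₄ (f : V → V → V → V → R) :
    distinctSum (fun x y z w => f x y w z) = distinctSum f := by
  refine sum_congr rfl fun x _ => sum_congr rfl fun y _ => ?_
  rw [sum_comm]
  exact sum_congr rfl fun z _ => sum_congr rfl fun w _ =>
    if_congr (((List.Perm.swap ..).cons y).cons x).nodup_iff rfl rfl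

lemma distinctSum_rotate (f : V → V → V → V → R) :
    distinctSum (fun x y z w => f y z w x) = distinctSum f := by
  rw [← distinctSum_swap₃₄ f, ← distinctSum_swap₂₃ fun x y z w => f x y w z,
    ← distinctSum_swap₁₂ fun x y z w => f x z w y]

lemma distinctSum_cyclicOrderSum (f : V → V → V → V → R) :
    distinctSum (cyclicOrderSum f) = 6 * distinctSum f := by
  have h₁ := distinctSum_swap₃₄ f
  have h₂ := distinctSum_swap₂₃ f
  have h₃ := (distinctSum_swap₂₃ fun x y z w => f x y w z).trans h₁
  have h₄ := (distinctSum_swap₃₄ fun x y z w => f x z y w).trans h₂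
  have h₅ := (distinctSum_swap₃₄ fun x y z w => f x z w y).trans h₃
  unfold cyclicOrderSum
  simp only [distinctSum_add, h₁, h₂, h₃, h₄, h₅]
  noncomm_ring

lemma distinctSum_vertexSum (f : V → V → V → V → R) :
    distinctSum (vertexSum f) = 4 * distinctSum f := by
  have h₁ := distinctSum_swap₁₂ f
  have h₂ := (distinctSum_swap₂₃ fun x y z w => f y x z w).trans h₁
  have h₃ := (distinctSum_swap₃₄ fun x y z w => f z x y w).trans h₂
  unfold vertexSum
  simp only [distinctSum_add, h₁, h₂, h₃]
  noncomm_ring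

end Semiring

section CommRing

variable [CommRing R]

lemma sum_ne_mul_of_isIdempotentElem {u : V → R} (hu : ∀ x, IsIdempotentElem (u x)) :
    ∑ x, ∑ y, (if x = y then 0 else u x * u y) = (∑ x, u x) * (∑ x, u x - 1) := by
  have split (x y : V) : (if x = y then 0 else u x * u y)
      = u x * u y - if x = y then u x else 0 := by
    have := (hu x).eq
    split_ifs <;> grind
  simp only [split, sum_sub_distrib, sum_ite_eq, mem_univ, if_true, ← sum_mul_sum]
  ring

lemma sum_nodup_mul_of_isIdempotentElem {u : V → R} (hu : ∀ x, IsIdempotentElem (u x)) :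
    ∑ x, ∑ y, ∑ z, (if [x, y, z].Nodup then u x * u y * u z else 0)
      = (∑ x, u x) * (∑ x, u x - 1) * (∑ x, u x - 2) := by
  have split (x y z : V) : (if [x, y, z].Nodup then u x * u y * u z else 0)
      = (if x = y then 0 else u x * u y) *
        (u z - (if x = z then 1 else 0) - (if y = z then 1 else 0)) := by
    have := (hu x).eq
    have := (hu y).eq
    simp only [List.nodup_cons, List.mem_cons, List.not_mem_nil, or_false, List.nodup_nil]
    split_ifs <;> grind
  simp only [split, ← mul_sum, sum_sub_distrib, sum_ite_eq, mem_univ, if_true, ← sum_mul,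
    sum_ne_mul_of_isIdempotentElem hu]
  ring

lemma distinctSum_starWeight {u : V → V → R} (hu : ∀ x y, IsIdempotentElem (u x y))
    (hu₀ : ∀ x, u x x = 0) :
    distinctSum (starWeight u)
      = ∑ x, (∑ y, u x y) * (∑ y, u x y - 1) * (∑ y, u x y - 2) := by
  refine sum_congr rfl fun x _ => ?_
  rw [← sum_nodup_mul_of_isIdempotentElem (hu x)]
  refine sum_congr rfl fun y _ => sum_congr rfl fun z _ => sum_congr rfl fun w _ => ?_
  have := hu₀ x
  simp only [starWeight, List.nodup_cons (a := x)]
  grind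

lemma distinctSum_const (c : R) :
    distinctSum (fun _ _ _ _ : V => c) = c * (Fintype.card V *
      ((Fintype.card V - 1) * (Fintype.card V - 2) * (Fintype.card V - 3))) := by
  have card_ne (x : V) : ∑ y, (if x = y then (0 : R) else 1) = Fintype.card V - 1 := by
    have split (y : V) : (if x = y then (0 : R) else 1) = 1 - if x = y then 1 else 0 := by
      split_ifs <;> simp
    simp [split]
  rw [distinctSum_congr (g := fun x y z w => c * starWeight (fun x y => if x = y then 0 else 1)
    x y z w), distinctSum_const_mul, distinctSum_starWeight]
  · simp only [card_ne, sum_const, card_univ, nsmul_eq_mul]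
    ring
  · intro x y
    split_ifs <;> simp [IsIdempotentElem]
  · simp
  · grind [starWeight]

end CommRing

end DistinctSums

namespace Tournament

variable {V : Type*} (T : Tournament V)

/-- The adjacency matrix of `T`, as a function. -/
def adj (x y : V) : ℤ := if T.r x y then 1 else 0

variable {T} in
lemma asymm {x y : V} (h : T.r x y) : ¬ T.r y x :=
  (T.total x y fun e => T.irrefl y (e ▸ h)).1 h

variable {T} in
lemma ne_of_rel {x y : V} (h : T.r x y) : x ≠ y := fun e => T.irrefl y (e ▸ h)

variable {T} in
@[simp]
lemma adj_of_rel {x y : V} (h : T.r x y) : T.adj x y = 1 := if_pos h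

variable {T} in
lemma adj_swap_of_rel {x y : V} (h : T.r x y) : T.adj y x = 0 := if_neg (asymm h)

lemma rel_or_adj_eq_zero (x y : V) : T.r x y ∨ T.adj x y = 0 := by
  unfold adj
  split_ifs <;> simp_all

lemma adj_eq_zero_or_one (x y : V) : T.adj x y = 0 ∨ T.adj x y = 1 :=
  ite_eq_or_eq _ _ _ |>.symm

@[simp]
lemma adj_self (x : V) : T.adj x x = 0 := if_neg (T.irrefl x)

lemma isIdempotentElem_adj (x y : V) : IsIdempotentElem (T.adj x y) := by
  rcases T.adj_eq_zero_or_one x y with e | e <;> simp [IsIdempotentElem, e]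

lemma adj_mul_adj_swap (x y : V) : T.adj x y * T.adj y x = 0 := by
  rcases T.rel_or_adj_eq_zero x y with h | h
  · simp [adj_swap_of_rel h]
  · simp [h]

lemma adj_add_adj_swap {x y : V} (hxy : x ≠ y) : T.adj x y + T.adj y x = 1 := by
  have := T.total x y hxy
  by_cases h : T.r y x <;> simp_all [adj]

lemma adj_swap [DecidableEq V] (x y : V) :
    T.adj y x = 1 - (if x = y then 1 else 0) - T.adj x y := by
  split_ifs with hxy
  · simp [hxy]
  · linarith [T.adj_add_adj_swap hxy]

/-- The indicator of the path `x → p → y`. -/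
def pathThrough (x p y : V) : ℤ := T.adj x p * T.adj p y

lemma isIdempotentElem_pathThrough (x p y : V) : IsIdempotentElem (T.pathThrough x p y) :=
  (T.isIdempotentElem_adj x p).mul (T.isIdempotentElem_adj p y)

/-- The pairs `(p, s)` completing `x, y, z, w` to two disjoint paths `x → p → y`, `z → s → w`. -/
def IsMidpointPair (x y z w p s : V) : Prop :=
  [x, y, z, w, p, s].Nodup ∧ (T.r x p ∧ T.r p y) ∧ T.r z s ∧ T.r s w

/-- The sequence `x, p, y, q, z, s, w, u`, as a function of its even and odd entries. -/
def evenOddEquiv (V : Type*) : V × V × V × V × V × V × V × V ≃ (ZMod 8 → V) where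
  toFun := fun (x, y, z, w, p, q, s, u) => (![x, p, y, q, z, s, w, u] : Fin 8 → V)
  invFun γ := (γ 0, γ 2, γ 4, γ 6, γ 1, γ 3, γ 5, γ 7)
  left_inv _ := rfl
  right_inv γ := by
    funext k
    change Fin 8 at k
    fin_cases k <;> rfl

lemma isCycle_evenOddEquiv_iff {x y z w p q s u : V} {γ : ZMod 8 → V}
    (hγ : γ = evenOddEquiv V (x, y, z, w, p, q, s, u)) :
    (Function.Injective γ ∧ ∀ k, T.r (γ k) (γ (k + 1))) ↔
      T.IsMidpointPair x y z w p s ∧ T.IsMidpointPair y z w x q u := by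
  have injective : Function.Injective γ ↔ [x, p, y, q, z, s, w, u].Nodup := by
    subst hγ
    exact (List.nodup_ofFn (f := (![x, p, y, q, z, s, w, u] : Fin 8 → V))).symm
  have cyclic : (∀ k, T.r (γ k) (γ (k + 1))) ↔
      T.r x p ∧ T.r p y ∧ T.r y q ∧ T.r q z ∧ T.r z s ∧ T.r s w ∧ T.r w u ∧ T.r u x := by
    subst hγ
    exact (Fin.forall_fin_succ (n := 7)).trans (by simp [Fin.forall_fin_succ]; rfl)
  rw [injective, cyclic]
  have ne (a b c : V) (h₁ : T.r a b) (h₂ : T.r b c) : c ≠ a := fun e => asymm h₁ (e ▸ h₂)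
  have := ne p y q
  have := ne q z s
  have := ne s w u
  have := ne u x p
  simp only [IsMidpointPair, List.nodup_cons, List.mem_cons, List.not_mem_nil, or_false,
    not_or, List.nodup_nil]
  grind

variable [Fintype V]

lemma sum_adj_mul_adj_eq_card (x y : V) :
    ∑ z, T.adj x z * T.adj y z = Nat.card {z : V // T.r x z ∧ T.r y z} := by
  classical
  simp only [adj, ite_zero_mul_ite_zero, one_mul, sum_boole, Nat.card_eq_fintype_card,
    Fintype.card_subtype]

lemma sum_ne_eq_sum_adj_mul [DecidableEq V] (f : V → V → ℤ) :
    ∑ x, ∑ y, (if x = y then 0 else f x y) = ∑ x, ∑ y, T.adj x y * (f x y + f y x) := by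
  have split (x y : V) : (if x = y then 0 else f x y)
      = T.adj x y * f x y + T.adj y x * f x y := by
    split_ifs with hxy
    · simp [hxy]
    · rw [← add_mul, T.adj_add_adj_swap hxy, one_mul]
  simp only [split, mul_add, sum_add_distrib]
  rw [sum_comm (f := fun x y => T.adj y x * f x y)]

lemma sum_adj_mul_add (φ ψ : V → ℤ) :
    ∑ x, ∑ y, T.adj x y * (φ x * ψ y + φ y * ψ x) = (∑ x, φ x) * (∑ y, ψ y) - ∑ x, φ x * ψ x := by
  classical
  have split (x y : V) : (if x = y then 0 else φ x * ψ y)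
      = φ x * ψ y - if x = y then φ x * ψ x else 0 := by
    split_ifs with hxy <;> simp [hxy]
  rw [← T.sum_ne_eq_sum_adj_mul fun x y => φ x * ψ y]
  simp only [split, sum_sub_distrib, sum_ite_eq, mem_univ, if_true, sum_mul_sum]

lemma two_mul_sum_adj_mul {u : V → ℤ} (hu : ∀ x, IsIdempotentElem (u x)) :
    2 * ∑ x, ∑ y, T.adj x y * (u x * u y) = (∑ x, u x) * (∑ x, u x - 1) := by
  calc _ = ∑ x, ∑ y, T.adj x y * (u x * u y + u y * u x) := by
        simp only [mul_sum]
        exact sum_congr rfl fun x _ => sum_congr rfl fun y _ => by ring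
    _ = _ := by
        simp only [T.sum_adj_mul_add, (hu _).eq]
        ring

section EightCycles

/-- The number of paths `x → p → y` with `p ≠ z` and `p ≠ w`, for `z ≠ w`. -/
def avoidingPaths (x y z w : V) : ℤ :=
  ∑ p, T.adj x p * T.adj p y - T.adj x z * T.adj z y - T.adj x w * T.adj w y

/-- The number of vertices `v` with `x → v → y` and `z → v → w`. -/
def crossings (x y z w : V) : ℤ :=
  ∑ v, T.adj x v * T.adj v y * (T.adj z v * T.adj v w)

/-- The number of ways to insert midpoints into the sides of the closed walk `x, y, z, w`, each
outside `{x, y, z, w}`. -/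
def sideMidpoints (x y z w : V) : ℤ :=
  T.avoidingPaths x y z w * T.avoidingPaths y z w x *
    (T.avoidingPaths z w x y * T.avoidingPaths w x y z)

variable [DecidableEq V]

instance (x y z w p s : V) : Decidable (T.IsMidpointPair x y z w p s) :=
  inferInstanceAs (Decidable (_ ∧ _))

lemma sum_isMidpointPair {x y z w : V} (hd : [x, y, z, w].Nodup) :
    ∑ p, ∑ s, (if T.IsMidpointPair x y z w p s then 1 else 0)
      = T.avoidingPaths x y z w * T.avoidingPaths z w x y - T.crossings x y z w := by
  let path (x y z w p : V) : ℤ :=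
    T.adj x p * T.adj p y - (if p = z then T.adj x p * T.adj p y else 0)
      - if p = w then T.adj x p * T.adj p y else 0
  have sum_path (x y z w : V) : ∑ p, path x y z w p = T.avoidingPaths x y z w := by
    simp [path, avoidingPaths]
  have split (p s : V) : (if T.IsMidpointPair x y z w p s then 1 else 0)
      = path x y z w p * path z w x y s
        - if p = s then T.adj x p * T.adj p y * (T.adj z p * T.adj p w) else 0 := by
    have := T.adj_self p
    have := fun x y h => ne_of_rel (T := T) (x := x) (y := y) h
    simp only [IsMidpointPair, adj, List.nodup_cons, List.mem_cons, List.not_mem_nil, or_false,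
      not_or, List.nodup_nil, path] at *
    grind
  simp only [split, sum_sub_distrib, ← sum_mul_sum, sum_path, sum_ite_eq, mem_univ, if_true,
    crossings]

/-- Split an eight-cycle into its even entries `x, y, z, w` and its odd entries: consecutive odd
entries differ because `T` has no cycles of length two, so only opposite ones can collide. -/
lemma card_eightCycles :
    (Nat.card {γ : ZMod 8 → V // Function.Injective γ ∧ ∀ k, T.r (γ k) (γ (k + 1))} : ℤ)
      = distinctSum fun x y z w =>
        (T.avoidingPaths x y z w * T.avoidingPaths z w x y - T.crossings x y z w) *
        (T.avoidingPaths y z w x * T.avoidingPaths w x y z - T.crossings y z w x) := by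
  let pairs (x y z w : V) : ℤ := ∑ p, ∑ s, if T.IsMidpointPair x y z w p s then 1 else 0
  calc _ = ∑ x, ∑ y, ∑ z, ∑ w, pairs x y z w * pairs y z w x := by
        rw [Nat.card_eq_fintype_card, Fintype.card_subtype, card_filter, Nat.cast_sum,
          ← (evenOddEquiv V).sum_comp]
        simp only [T.isCycle_evenOddEquiv_iff rfl, Fintype.sum_prod_type, Nat.cast_ite,
          Nat.cast_one, Nat.cast_zero, pairs, sum_mul_sum, ite_zero_mul_ite_zero, one_mul]
    _ = distinctSum fun x y z w => pairs x y z w * pairs y z w x := by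
        refine (distinctSum_eq_sum fun x y z w hd => ?_).symm
        have : pairs x y z w = 0 := sum_eq_zero fun p _ => sum_eq_zero fun s _ =>
          if_neg fun h => hd (h.1.sublist (List.prefix_append [x, y, z, w] [p, s]).sublist)
        rw [this, zero_mul]
    _ = _ := distinctSum_congr fun x y z w hd => by
        rw [← T.sum_isMidpointPair hd, ← T.sum_isMidpointPair (by grind)]

/-- Group the sum by the common midpoint `v`, and orient the pairs inside its in-set and out-set. -/
lemma distinctSum_mul_crossings {f : V → V → V → V → ℤ} (hf : ∀ x y z w, f z w x y = f x y z w) :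
    distinctSum (fun x y z w => f x y z w * T.crossings x y z w)
      = 2 * ∑ v, ∑ y, ∑ w, T.adj y w * (T.adj v y * T.adj v w) *
        ∑ x, ∑ z, T.adj x z * (T.adj x v * T.adj z v) * (f x y z w + f x w z y) := by
  let term (v x y z w : V) : ℤ := if y = w then 0 else if x = z then 0 else
    T.adj v y * T.adj v w * (T.adj x v * T.adj z v) * f x y z w
  have pointwise (x y z w : V) :
      (if [x, y, z, w].Nodup then f x y z w * T.crossings x y z w else 0)
        = ∑ v, term v x y z w := by
    by_cases hyw : y = w
    · simp [term, hyw]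
    by_cases hxz : x = z
    · simp [term, hxz]
    simp only [term, if_neg hyw, if_neg hxz, crossings, mul_sum]
    split_ifs with hd
    · exact sum_congr rfl fun v _ => by ring
    · refine (sum_eq_zero fun v _ => ?_).symm
      have := T.adj_mul_adj_swap x v
      have := T.adj_mul_adj_swap z v
      simp only [List.nodup_cons, List.mem_cons, List.not_mem_nil, or_false, List.nodup_nil] at hd
      grind
  calc _ = ∑ v, ∑ y, ∑ w, ∑ x, ∑ z, term v x y z w := by
        simp only [distinctSum, pointwise]
        simp_rw [← Fintype.sum_prod_type']
        exact Fintype.sum_equiv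
          { toFun := fun (x, y, z, w, v) => (v, y, w, x, z)
            invFun := fun (v, y, w, x, z) => (x, y, z, w, v)
            left_inv := fun _ => rfl
            right_inv := fun _ => rfl } _ _ fun _ => rfl
    _ = _ := by
        rw [mul_sum]
        refine sum_congr rfl fun v _ => ?_
        simp only [term, sum_ite_irrel, sum_const_zero, T.sum_ne_eq_sum_adj_mul, mul_sum,
          ← sum_add_distrib]
        refine sum_congr rfl fun y _ => sum_congr rfl fun w _ => sum_congr rfl fun x _ =>
          sum_congr rfl fun z _ => ?_
        rw [hf x w z y, hf x y z w]
        ring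

lemma distinctSum_crossings_mul_crossings :
    distinctSum (fun x y z w => T.crossings x y z w * T.crossings y z w x)
      = ∑ v, ∑ u, ((∑ x, T.adj u x * T.adj x v) * (∑ x, T.adj u x * T.adj x v - 1)) *
        ((∑ y, T.adj v y * T.adj y u) * (∑ y, T.adj v y * T.adj y u - 1)) := by
  let pairs (v u x z : V) : ℤ :=
    if x = z then 0 else (T.adj u x * T.adj x v) * (T.adj u z * T.adj z v)
  have sum_pairs (v u : V) : (∑ x, T.adj u x * T.adj x v) * (∑ x, T.adj u x * T.adj x v - 1)
      = ∑ x, ∑ z, pairs v u x z :=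
    (sum_ne_mul_of_isIdempotentElem fun x => T.isIdempotentElem_pathThrough u x v).symm
  have pointwise (x y z w : V) : (if [x, y, z, w].Nodup then
      T.crossings x y z w * T.crossings y z w x else 0)
        = ∑ v, ∑ u, pairs v u x z * pairs u v y w := by
    by_cases hxz : x = z
    · simp [pairs, hxz]
    by_cases hyw : y = w
    · simp [pairs, hyw]
    simp only [pairs, if_neg hxz, if_neg hyw, crossings, sum_mul_sum]
    split_ifs with hd
    · exact sum_congr rfl fun v _ => sum_congr rfl fun u _ => by ring
    · refine (sum_eq_zero fun v _ => sum_eq_zero fun u _ => ?_).symm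
      have := T.adj_mul_adj_swap x v
      have := T.adj_mul_adj_swap z v
      simp only [List.nodup_cons, List.mem_cons, List.not_mem_nil, or_false, List.nodup_nil] at hd
      grind
  simp only [sum_pairs, distinctSum, pointwise, sum_mul, mul_sum]
  simp_rw [← Fintype.sum_prod_type']
  exact Fintype.sum_equiv
    { toFun := fun (x, y, z, w, v, u) => (v, u, y, w, x, z)
      invFun := fun (v, u, y, w, x, z) => (x, y, z, w, v, u)
      left_inv := fun _ => rfl
      right_inv := fun _ => rfl } _ _ fun _ => rfl

end EightCycles

namespace IsDoublyRegular

variable {T} {t : ℕ}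

lemma sum_common_out (h : T.IsDoublyRegular t) {x y : V} (hxy : x ≠ y) :
    ∑ z, T.adj x z * T.adj y z = t := by
  rw [T.sum_adj_mul_adj_eq_card, h x y hxy]

lemma sum_adj_le (h : T.IsDoublyRegular t) (x : V) : ∑ y, T.adj x y ≤ 2 * t + 1 := by
  have arcs : ∑ y, ∑ z, T.adj y z * (T.adj x y * T.adj x z) = t * ∑ y, T.adj x y := by
    rw [mul_sum]
    refine sum_congr rfl fun y _ => ?_
    rcases T.rel_or_adj_eq_zero x y with hxy | hxy
    · simp only [adj_of_rel hxy, one_mul, mul_one, mul_comm (T.adj y _),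
        h.sum_common_out (ne_of_rel hxy)]
    · simp [hxy]
  have double_count := T.two_mul_sum_adj_mul (T.isIdempotentElem_adj x)
  rw [arcs] at double_count
  by_contra! hlt
  nlinarith

variable (h : T.IsDoublyRegular t) (hV : Fintype.card V = 4 * t + 3)
include h hV

/-- Out-degrees average to `2 * t + 1`, which is also an upper bound. -/
lemma sum_adj (x : V) : ∑ y, T.adj x y = 2 * t + 1 := by
  have total : ∑ x, ∑ y, T.adj x y = ∑ _x : V, (2 * t + 1 : ℤ) := by
    have arcs := T.two_mul_sum_adj_mul (u := fun _ => 1) fun _ => .one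
    simp only [mul_one, sum_const, card_univ, nsmul_eq_mul, hV] at arcs ⊢
    push_cast at arcs ⊢
    linarith
  exact (sum_eq_sum_iff_of_le fun x _ => h.sum_adj_le x).1 total x (mem_univ x)

lemma sum_adj_in (x : V) : ∑ y, T.adj y x = 2 * t + 1 := by
  classical
  simp only [T.adj_swap x, sum_sub_distrib, sum_const, card_univ, sum_ite_eq, mem_univ, if_true,
    nsmul_eq_mul, hV, h.sum_adj hV]
  push_cast
  ring

lemma sum_two_paths {x y : V} (hxy : x ≠ y) :
    ∑ z, T.adj x z * T.adj z y = t + 1 - T.adj x y := by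
  classical
  simp only [T.adj_swap y, mul_sub, sum_sub_distrib, mul_one, mul_ite, mul_zero, sum_ite_eq,
    mem_univ, if_true, h.sum_adj hV, h.sum_common_out hxy]
  ring

lemma sum_common_in {x y : V} (hxy : x ≠ y) : ∑ z, T.adj z x * T.adj z y = t := by
  classical
  simp only [T.adj_swap x, sub_mul, sum_sub_distrib, one_mul, ite_mul, zero_mul, sum_ite_eq,
    mem_univ, if_true, h.sum_adj_in hV, h.sum_two_paths hV hxy]
  ring

lemma avoidingPaths_eq {x y : V} (hxy : x ≠ y) (z w : V) :
    T.avoidingPaths x y z w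
      = t + 1 - T.adj x y - T.adj x z * T.adj z y - T.adj x w * T.adj w y := by
  rw [avoidingPaths, h.sum_two_paths hV hxy]

section SideMidpoints

lemma distinctSum_cycleWeight_adj [DecidableEq V] :
    distinctSum (cycleWeight T.adj) = (4 * t + 3) * (4 * t + 2) * (t * (t + 1)) := by
  have two_paths (x z : V) : (∑ y, T.adj x y * T.adj y z) * ∑ w, T.adj z w * T.adj w x
      = t * (t + 1) - if x = z then (t * (t + 1) : ℤ) else 0 := by
    split_ifs with hxz
    · simp [hxz, T.adj_mul_adj_swap]
    · rw [h.sum_two_paths hV hxz, h.sum_two_paths hV (Ne.symm hxz)]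
      linear_combination -(t + 1) * T.adj_add_adj_swap hxz + T.adj_mul_adj_swap x z
  calc distinctSum (cycleWeight T.adj)
      = ∑ x, ∑ y, ∑ z, ∑ w, cycleWeight T.adj x y z w := by
        refine distinctSum_eq_sum fun x y z w hd => ?_
        have := T.adj_mul_adj_swap x y
        have := T.adj_mul_adj_swap y z
        have := T.adj_self
        simp only [List.nodup_cons, List.mem_cons, List.not_mem_nil, or_false, List.nodup_nil] at hd
        grind [cycleWeight]
    _ = ∑ x, ∑ z, (∑ y, T.adj x y * T.adj y z) * ∑ w, T.adj z w * T.adj w x := by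
        refine sum_congr rfl fun x _ => ?_
        rw [sum_comm]
        simp only [sum_mul_sum, cycleWeight, mul_assoc]
    _ = _ := by
        simp only [two_paths, sum_sub_distrib, sum_const, card_univ, nsmul_eq_mul, hV, sum_ite_eq,
          mem_univ, if_true]
        push_cast
        ring

/-- Over all cyclic orders of a quadruple, the midpoint counts depend on the tournament induced
on it only through its stars and its four-cycles. -/
lemma cyclicOrderSum_sideMidpoints {s : ℤ} (hs : s = t + 1) {x y z w : V}
    (hd : [x, y, z, w].Nodup) :
    cyclicOrderSum T.sideMidpoints x y z w
      = -23 * s + 46 * s ^ 2 - 28 * s ^ 3 + 6 * s ^ 4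
        + (11 * s - 16 * s ^ 2 + 4 * s ^ 3) * (vertexSum (starWeight T.adj) x y z w
          + vertexSum (starWeight fun i j => T.adj j i) x y z w)
        + (7 - 8 * s) * cyclicOrderSum (cycleWeight T.adj) x y z w := by
  simp only [List.nodup_cons, List.mem_cons, List.not_mem_nil, or_false, not_or,
    List.nodup_nil, not_false_eq_true, and_true] at hd
  obtain ⟨⟨hxy, hxz, hxw⟩, ⟨hyz, hyw⟩, hzw⟩ := hd
  simp only [cyclicOrderSum, vertexSum, starWeight, cycleWeight, sideMidpoints,
    h.avoidingPaths_eq hV hxy, h.avoidingPaths_eq hV hxz, h.avoidingPaths_eq hV hxw,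
    h.avoidingPaths_eq hV hyz, h.avoidingPaths_eq hV hyw, h.avoidingPaths_eq hV hzw,
    h.avoidingPaths_eq hV (Ne.symm hxy), h.avoidingPaths_eq hV (Ne.symm hxz),
    h.avoidingPaths_eq hV (Ne.symm hxw), h.avoidingPaths_eq hV (Ne.symm hyz),
    h.avoidingPaths_eq hV (Ne.symm hyw), h.avoidingPaths_eq hV (Ne.symm hzw), ← hs,
    eq_sub_of_add_eq' (T.adj_add_adj_swap hxy), eq_sub_of_add_eq' (T.adj_add_adj_swap hxz),
    eq_sub_of_add_eq' (T.adj_add_adj_swap hxw), eq_sub_of_add_eq' (T.adj_add_adj_swap hyz),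
    eq_sub_of_add_eq' (T.adj_add_adj_swap hyw), eq_sub_of_add_eq' (T.adj_add_adj_swap hzw)]
  rcases T.adj_eq_zero_or_one x y with e₁ | e₁ <;> rcases T.adj_eq_zero_or_one x z with e₂ | e₂ <;>
    rcases T.adj_eq_zero_or_one x w with e₃ | e₃ <;>
    rcases T.adj_eq_zero_or_one y z with e₄ | e₄ <;>
    rcases T.adj_eq_zero_or_one y w with e₅ | e₅ <;>
    rcases T.adj_eq_zero_or_one z w with e₆ | e₆ <;>
    simp only [e₁, e₂, e₃, e₄, e₅, e₆] <;> ring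

lemma distinctSum_sideMidpoints [DecidableEq V] {s : ℤ} (hs : s = t + 1) :
    3 * distinctSum T.sideMidpoints
      = (4 * t + 3) * (2 * t + 1) * t *
        (4 * (4 * t + 1) * (-23 * s + 46 * s ^ 2 - 28 * s ^ 3 + 6 * s ^ 4)
          + 8 * (2 * t - 1) * (11 * s - 16 * s ^ 2 + 4 * s ^ 3) + 6 * s * (7 - 8 * s)) := by
  have out_stars := distinctSum_starWeight T.isIdempotentElem_adj T.adj_self
  have in_stars := distinctSum_starWeight (fun x y => T.isIdempotentElem_adj y x) T.adj_self
  have key := distinctSum_congr fun x y z w hd => h.cyclicOrderSum_sideMidpoints hV hs hd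
  simp only [h.sum_adj hV, h.sum_adj_in hV, sum_const, card_univ, nsmul_eq_mul, hV]
    at out_stars in_stars
  rw [distinctSum_cyclicOrderSum] at key
  simp only [distinctSum_add, distinctSum_const_mul, distinctSum_const,
    distinctSum_cyclicOrderSum, distinctSum_vertexSum, out_stars, in_stars,
    h.distinctSum_cycleWeight_adj hV, hV] at key
  push_cast at key
  subst hs
  linarith

end SideMidpoints

section Crossings

lemma sum_two_paths_pairs {v u : V} (hvu : v ≠ u) :
    ((∑ x, T.adj u x * T.adj x v) * (∑ x, T.adj u x * T.adj x v - 1)) *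
      ((∑ y, T.adj v y * T.adj y u) * (∑ y, T.adj v y * T.adj y u - 1))
      = t * (t - 1) * ((t + 1) * t) := by
  rw [h.sum_two_paths hV hvu, h.sum_two_paths hV hvu.symm,
    eq_sub_of_add_eq' (T.adj_add_adj_swap hvu)]
  rcases T.adj_eq_zero_or_one v u with e | e <;> rw [e] <;> ring

lemma distinctSum_crossings_mul_crossings [DecidableEq V] :
    distinctSum (fun x y z w => T.crossings x y z w * T.crossings y z w x)
      = (4 * t + 3) * (4 * t + 2) * (t * (t - 1) * ((t + 1) * t)) := by
  have two_paths (v u : V) : ((∑ x, T.adj u x * T.adj x v) * (∑ x, T.adj u x * T.adj x v - 1)) *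
      ((∑ y, T.adj v y * T.adj y u) * (∑ y, T.adj v y * T.adj y u - 1))
      = t * (t - 1) * ((t + 1) * t) - if v = u then (t * (t - 1) * ((t + 1) * t) : ℤ) else 0 := by
    split_ifs with hvu
    · simp [hvu, T.adj_mul_adj_swap]
    · rw [h.sum_two_paths_pairs hV hvu, sub_zero]
  simp only [T.distinctSum_crossings_mul_crossings, two_paths, sum_sub_distrib, sum_const,
    card_univ, nsmul_eq_mul, hV, sum_ite_eq, mem_univ, if_true]
  push_cast
  ring

/-- The in-set of `v` induces a regular tournament, so each of its vertices has `t` out-arcs and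
`t` in-arcs inside it. -/
lemma sum_inArcs_mul_left (v : V) (f : V → ℤ) :
    ∑ x, ∑ z, T.adj x z * (T.adj x v * T.adj z v) * f x = t * ∑ x, T.adj x v * f x := by
  rw [mul_sum]
  refine sum_congr rfl fun x _ => ?_
  rcases T.rel_or_adj_eq_zero x v with hxv | hxv
  · have out_arcs := h.sum_two_paths hV (ne_of_rel hxv)
    rw [adj_of_rel hxv, add_sub_cancel_right] at out_arcs
    simp only [adj_of_rel hxv, one_mul, ← sum_mul, out_arcs]
  · simp [hxv]

lemma sum_inArcs_mul_right (v : V) (f : V → ℤ) :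
    ∑ x, ∑ z, T.adj x z * (T.adj x v * T.adj z v) * f z = t * ∑ z, T.adj z v * f z := by
  rw [mul_sum, sum_comm]
  refine sum_congr rfl fun z _ => ?_
  rcases T.rel_or_adj_eq_zero z v with hzv | hzv
  · simp only [adj_of_rel hzv, one_mul, mul_one, ← sum_mul, h.sum_common_in hV (ne_of_rel hzv)]
  · simp [hzv]

lemma sum_inArcs (v : V) :
    ∑ x, ∑ z, T.adj x z * (T.adj x v * T.adj z v) = t * (2 * t + 1) := by
  simpa [h.sum_adj_in hV] using h.sum_inArcs_mul_left hV v fun _ => 1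

lemma sum_pathThrough {v y : V} (hvy : T.r v y) : ∑ x, T.pathThrough y x v = t + 1 := by
  simp only [pathThrough, h.sum_two_paths hV (ne_of_rel hvy).symm, adj_swap_of_rel hvy, sub_zero]

/-- The product of path counts that remains when `v` is a common midpoint of `x → y`, `z → w`,
added to the one for `x → w`, `z → y`, in a form that can be summed over the arcs `x → z`. -/
lemma inArc_mul_avoidingPaths {s : ℤ} (hs : s = t + 1) {v y w : V} (hvy : T.r v y)
    (hvw : T.r v w) (hyw : T.r y w) (x z : V) :
    T.adj x z * (T.adj x v * T.adj z v) *
        (T.avoidingPaths y z w x * T.avoidingPaths w x y z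
          + T.avoidingPaths w z y x * T.avoidingPaths y x w z)
      = 2 * s ^ 2 * (T.adj x z * (T.adj x v * T.adj z v))
        + T.adj x z * (T.adj x v * T.adj z v) *
          ((1 - 3 * s) * T.adj w x - 2 * s * T.adj y x + 2 * (T.adj w x * T.pathThrough y x v))
        - s * (T.adj x z * (T.adj x v * T.adj z v) * (T.adj y z + 2 * T.adj w z))
        + T.adj x z * (T.pathThrough w x v * T.pathThrough y z v
          + T.pathThrough w z v * T.pathThrough y x v)
        + T.adj x z * (T.pathThrough w x v * T.pathThrough w z v
          + T.pathThrough w z v * T.pathThrough w x v) := by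
  rcases T.rel_or_adj_eq_zero x z with hxz | hxz
  · rcases T.rel_or_adj_eq_zero x v with hxv | hxv
    · rcases T.rel_or_adj_eq_zero z v with hzv | hzv
      · have ne {a b : V} (ha : T.r a v) (hb : T.r v b) : b ≠ a := fun e => asymm ha (e ▸ hb)
        rw [h.avoidingPaths_eq hV (ne hzv hvy), h.avoidingPaths_eq hV (ne hxv hvw),
          h.avoidingPaths_eq hV (ne hzv hvw), h.avoidingPaths_eq hV (ne hxv hvy), ← hs]
        simp only [pathThrough, adj_of_rel hxv, adj_of_rel hzv, adj_of_rel hxz,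
          adj_swap_of_rel hxz, adj_of_rel hyw, adj_swap_of_rel hyw]
        linear_combination (T.isIdempotentElem_adj w x).eq
      · simp [pathThrough, hzv]
    · simp [pathThrough, hxv]
  · simp [hxz]

lemma sum_inArcs_avoidingPaths {s : ℤ} (hs : s = t + 1) {v y w : V} (hvy : T.r v y)
    (hvw : T.r v w) (hyw : T.r y w) :
    ∑ x, ∑ z, T.adj x z * (T.adj x v * T.adj z v) *
        (T.avoidingPaths y z w x * T.avoidingPaths w x y z
          + T.avoidingPaths w z y x * T.avoidingPaths y x w z)
      = 2 * s ^ 2 * (t * (2 * t + 1)) - 8 * s ^ 2 * t + 2 * t * s + s ^ 2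
        + (2 * t - 1) * ∑ x, T.pathThrough w x v * T.pathThrough y x v := by
  have tails : ∑ x, T.adj x v *
        ((1 - 3 * s) * T.adj w x - 2 * s * T.adj y x + 2 * (T.adj w x * T.pathThrough y x v))
      = (1 - 3 * s) * ∑ x, T.pathThrough w x v - 2 * s * ∑ x, T.pathThrough y x v
        + 2 * ∑ x, T.pathThrough w x v * T.pathThrough y x v := by
    simp only [mul_sum, ← sum_add_distrib, ← sum_sub_distrib, pathThrough]
    exact sum_congr rfl fun x _ => by ring
  have heads : ∑ z, T.adj z v * (T.adj y z + 2 * T.adj w z)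
      = ∑ z, T.pathThrough y z v + 2 * ∑ z, T.pathThrough w z v := by
    simp only [mul_sum, ← sum_add_distrib, pathThrough]
    exact sum_congr rfl fun z _ => by ring
  simp only [h.inArc_mul_avoidingPaths hV hs hvy hvw hyw, sum_add_distrib, sum_sub_distrib,
    ← mul_sum, h.sum_inArcs_mul_left hV, h.sum_inArcs_mul_right hV, h.sum_inArcs hV,
    T.sum_adj_mul_add, (T.isIdempotentElem_pathThrough _ _ _).eq, tails, heads,
    h.sum_pathThrough hV hvy, h.sum_pathThrough hV hvw, ← hs]
  linear_combination s * hs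

lemma sum_outArcs (v : V) :
    ∑ y, ∑ w, T.adj y w * (T.adj v y * T.adj v w) = t * (2 * t + 1) := by
  have := T.two_mul_sum_adj_mul (T.isIdempotentElem_adj v)
  rw [h.sum_adj hV] at this
  linarith

/-- Double counting: for each `x → v`, the common out-neighbours of `v` and in-neighbours of `x`
form a set of size `t + 1`. -/
lemma two_mul_sum_outArcs_pathThrough (v : V) :
    2 * ∑ y, ∑ w, T.adj y w * (T.adj v y * T.adj v w) *
        ∑ x, T.pathThrough w x v * T.pathThrough y x v
      = (2 * t + 1) * ((t + 1) * t) := by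
  have per_vertex (x : V) :
      2 * ∑ y, ∑ w, T.adj y w * (T.pathThrough v y x * T.pathThrough v w x) * T.adj x v
        = (t + 1) * t * T.adj x v := by
    rcases T.rel_or_adj_eq_zero x v with hxv | hxv
    · simp only [adj_of_rel hxv, mul_one,
        T.two_mul_sum_adj_mul fun y => T.isIdempotentElem_pathThrough v y x,
        h.sum_pathThrough hV hxv, add_sub_cancel_right]
    · simp [hxv]
  have regroup : ∑ x, 2 * ∑ y, ∑ w, T.adj y w * (T.pathThrough v y x * T.pathThrough v w x) *
      T.adj x v = 2 * ∑ y, ∑ w, T.adj y w * (T.adj v y * T.adj v w) *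
        ∑ x, T.pathThrough w x v * T.pathThrough y x v := by
    simp only [mul_sum]
    rw [sum_comm]
    refine sum_congr rfl fun y _ => ?_
    rw [sum_comm]
    refine sum_congr rfl fun w _ => sum_congr rfl fun x _ => ?_
    simp only [pathThrough]
    linear_combination -(2 * T.adj y w * T.adj v y * T.adj v w * T.adj y x * T.adj w x) *
      (T.isIdempotentElem_adj x v).eq
  rw [← regroup, sum_congr rfl fun x _ => per_vertex x, ← mul_sum, h.sum_adj_in hV]
  ring

lemma distinctSum_avoidingPaths_mul_crossings [DecidableEq V] {s : ℤ} (hs : s = t + 1) :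
    distinctSum (fun x y z w =>
        T.avoidingPaths y z w x * T.avoidingPaths w x y z * T.crossings x y z w)
      = (4 * t + 3) * (2 * (2 * t + 1) * t *
          (2 * s ^ 2 * (t * (2 * t + 1)) - 8 * s ^ 2 * t + 2 * t * s + s ^ 2)
        + (2 * t - 1) * ((2 * t + 1) * (s * t))) := by
  have per_arc (v y w : V) : T.adj y w * (T.adj v y * T.adj v w) *
        ∑ x, ∑ z, T.adj x z * (T.adj x v * T.adj z v) *
          (T.avoidingPaths y z w x * T.avoidingPaths w x y z
            + T.avoidingPaths w z y x * T.avoidingPaths y x w z)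
      = (2 * s ^ 2 * (t * (2 * t + 1)) - 8 * s ^ 2 * t + 2 * t * s + s ^ 2) *
          (T.adj y w * (T.adj v y * T.adj v w))
        + (2 * t - 1) * (T.adj y w * (T.adj v y * T.adj v w) *
          ∑ x, T.pathThrough w x v * T.pathThrough y x v) := by
    rcases T.rel_or_adj_eq_zero y w with hyw | hyw
    · rcases T.rel_or_adj_eq_zero v y with hvy | hvy
      · rcases T.rel_or_adj_eq_zero v w with hvw | hvw
        · rw [h.sum_inArcs_avoidingPaths hV hs hvy hvw hyw]
          ring
        · simp [hvw]
      · simp [hvy]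
    · simp [hyw]
  have per_midpoint (v : V) := h.two_mul_sum_outArcs_pathThrough hV v
  rw [← hs] at per_midpoint
  rw [T.distinctSum_mul_crossings fun x y z w => mul_comm _ _, mul_sum]
  have : (Fintype.card V : ℤ) = 4 * t + 3 := by rw [hV]; push_cast; rfl
  rw [← this, ← card_univ, ← nsmul_eq_mul, ← sum_const]
  refine sum_congr rfl fun v _ => ?_
  simp only [per_arc, sum_add_distrib, ← mul_sum, h.sum_outArcs hV]
  linear_combination (2 * t - 1) * per_midpoint v

end Crossings

lemma card_eightCycles :
    (Nat.card {γ : ZMod 8 → V // Function.Injective γ ∧ ∀ k, T.r (γ k) (γ (k + 1))} : ℤ)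
      = 2 * (4 * t + 3) * (2 * t + 1) * (t ^ 2 * (t ^ 2 - 1)) * (16 * t ^ 2 - 4 * t - 11) := by
  classical
  let mixed (x y z w : V) : ℤ :=
    T.avoidingPaths y z w x * T.avoidingPaths w x y z * T.crossings x y z w
  have expand : (fun x y z w =>
        (T.avoidingPaths x y z w * T.avoidingPaths z w x y - T.crossings x y z w) *
        (T.avoidingPaths y z w x * T.avoidingPaths w x y z - T.crossings y z w x))
      = fun x y z w => T.sideMidpoints x y z w + -1 * mixed x y z w + -1 * mixed y z w x
        + T.crossings x y z w * T.crossings y z w x := by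
    funext x y z w
    simp only [sideMidpoints, mixed]
    ring
  have sides := h.distinctSum_sideMidpoints hV rfl
  rw [T.card_eightCycles, expand]
  simp only [distinctSum_add, distinctSum_const_mul, distinctSum_rotate mixed,
    h.distinctSum_avoidingPaths_mul_crossings hV rfl, mixed,
    h.distinctSum_crossings_mul_crossings hV]
  linarith

end IsDoublyRegular

end Tournament

lemma four_dvd_sq_mul_sq_sub_one (a : ℤ) : 4 ∣ a ^ 2 * (a ^ 2 - 1) := by
  rcases Int.even_or_odd a with ha | ha
  · exact (pow_dvd_pow_of_dvd ha.two_dvd 2).mul_right _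
  · exact (dvd_trans (by norm_num) (Int.eight_dvd_sq_sub_one_of_odd ha)).mul_left _

theorem eight_cycles_of_doubly_regular_general {V : Type*} {t n : ℕ} (hn : n = 4 * t + 3)
    (T : Tournament V) (hV : Nat.card V = n) (hDR : T.IsDoublyRegular t) :
    2048 * (numCycles T.r 8 : ℤ) =
      ((n : ℤ) + 1) * (n : ℤ) * ((n : ℤ) - 1) * ((n : ℤ) - 3) ^ 2 * ((n : ℤ) - 7) *
        ((n : ℤ) ^ 2 - 7 * (n : ℤ) + 1) := by
  have : Finite V := Nat.finite_of_card_ne_zero (by lia)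
  have := Fintype.ofFinite V
  rw [Nat.card_eq_fintype_card] at hV
  obtain ⟨m, hm⟩ := four_dvd_sq_mul_sq_sub_one t
  have cycles : (numCycles T.r 8 : ℤ) = (4 * t + 3) * (2 * t + 1) * m *
      (16 * t ^ 2 - 4 * t - 11) := by
    rw [numCycles, Int.natCast_div, hDR.card_eightCycles (hV.trans hn), hm]
    refine Int.ediv_eq_of_eq_mul_right (by norm_num) ?_
    push_cast
    ring
  rw [cycles, hn]
  push_cast
  linear_combination (-512 * (4 * (t : ℤ) + 3) * (2 * t + 1) * (16 * t ^ 2 - 4 * t - 11)) * hm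

theorem eight_cycles_of_doubly_regular
    (t n : ℕ) (hn : n = 4 * t + 3) (T : Tournament (Fin n))
    (hDR : T.IsDoublyRegular t) :
    2048 * (numCycles T.r 8 : ℤ) =
      ((n : ℤ) + 1) * (n : ℤ) * ((n : ℤ) - 1) * ((n : ℤ) - 3) ^ 2 * ((n : ℤ) - 7) *
        ((n : ℤ) ^ 2 - 7 * (n : ℤ) + 1) :=
  eight_cycles_of_doubly_regular_general hn T (Nat.card_fin n) hDR
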